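/- Let N be a group and H a finite central subgroup of N such that N/H is abelian and N/H is finitely generated (or more generally, such that the subgroup generated by k-th powers together with H has finite index, where k = |H|). Then the center Z(N) has finite index in N. -/

import Mathlib

/-- If `H` is a finite central subgroup of order `k` with `N/H` abelian, and the subgroup
generated by `k`-th powers together with `H` has finite index, then the center of `N`
has finite index. -/
theorem center_finiteIndex {N : Type*} [Group N] (H : Subgroup N) [H.Normal]
    (hcent : H ≤ Subgroup.center N) [Finite H] (k : ℕ) (hk : Nat.card H = k)
    (habel : ∀ x y : N ⧸ H, x * y = y * x)
    (hfin : (Subgroup.closure ({x : N | ∃ g : N, x = g ^ k} ∪ (H : Set N))).FiniteIndex) :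
    (Subgroup.center N).FiniteIndex := by
  have hle : Subgroup.closure ({x : N | ∃ g : N, x = g ^ k} ∪ (H : Set N))
      ≤ Subgroup.center N := by
    rw [Subgroup.closure_le]
    rintro x (⟨g, rfl⟩ | hx)
    · refine Subgroup.mem_center_iff.mpr fun h => ?_
      have hc : h * g * h⁻¹ * g⁻¹ ∈ H := by
        rw [← QuotientGroup.eq_one_iff]
        have := habel (h : N ⧸ H) (g : N ⧸ H)
        simp only [QuotientGroup.mk_mul, QuotientGroup.mk_inv]
        rw [this]
        group
      have hck : (h * g * h⁻¹ * g⁻¹) ^ k = 1 := by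
        have h1 : (⟨_, hc⟩ : H) ^ k = 1 := by rw [← hk]; exact pow_card_eq_one'
        simpa using congrArg Subtype.val h1
      have hcomm : Commute (h * g * h⁻¹ * g⁻¹) g :=
        (Subgroup.mem_center_iff.mp (hcent hc) g).symm
      have h2 : (h * g * h⁻¹) ^ k = g ^ k := by
        have h3 : h * g * h⁻¹ = (h * g * h⁻¹ * g⁻¹) * g := by group
        rw [h3, hcomm.mul_pow, hck, one_mul]
      rw [conj_pow] at h2
      exact mul_inv_eq_iff_eq_mul.mp h2
    · exact hcent hx
  exact Subgroup.finiteIndex_of_le hle
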